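/- The semi-Thue system R over Σ = A ∪ Ā with rules a b̄ → b̄ a for a ≠ b, a b b̄ → a b̄ b, and a ā b̄ → ā a b̄ (for a, b ∈ A) is confluent. -/

import Mathlib

/-- A basic queue action: write a letter or read a letter. -/
inductive Act (A : Type) : Type
  | wr (a : A)
  | rd (a : A)
deriving DecidableEq

variable {A : Type} [DecidableEq A]

/-- The action of words over `Act A` on queue states `A* ∪ {⊥}` (⊥ = `none`). -/
def act : Option (List A) → List (Act A) → Option (List A)
  | q, [] => q
  | none, _ :: _ => none
  | some q, (Act.wr a) :: u => act (some (q ++ [a])) u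
  | some q, (Act.rd a) :: u =>
    match q with
    | [] => none
    | b :: q' => if b = a then act (some q') u else none

/-- Two words over `Act A` are equivalent if they act identically on all queues. -/
def qequiv (u v : List (Act A)) : Prop := ∀ q : List A, act (some q) u = act (some q) v

/-- Writing the word `w`. -/
def W (w : List A) : List (Act A) := w.map Act.wr

/-- Reading the word `w` (the barred copy of `w`). -/
def R (w : List A) : List (Act A) := w.map Act.rd

/-- `shuffle s` is the word `s₁ s̄₁ s₂ s̄₂ … sₖ s̄ₖ`. -/
def shuffle (s : List A) : List (Act A) := s.flatMap fun a => [Act.wr a, Act.rd a]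

/-- The projection to write letters. -/
def prW (w : List (Act A)) : List A :=
  w.filterMap fun x => match x with | Act.wr a => some a | Act.rd _ => none

/-- The projection to read letters (with the bars removed). -/
def prR (w : List (Act A)) : List A :=
  w.filterMap fun x => match x with | Act.wr _ => none | Act.rd a => some a

theorem act_append (u v : List (Act A)) : ∀ q, act q (u ++ v) = act (act q u) v := by
  induction u with
  | nil =>
      intro q
      cases q <;> rfl
  | cons x u ih =>
      intro q
      cases q with
      | none =>
          simp only [List.cons_append, act]
          cases v with
          | nil => rfl
          | cons _ _ => rfl
      | some q =>
          cases x with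
          | wr a => simpa [act] using ih _
          | rd a =>
              cases q with
              | nil =>
                  simp only [List.cons_append, act]
                  cases v with
                  | nil => rfl
                  | cons _ _ => rfl
              | cons b q' =>
                  by_cases h : b = a
                  · simp [List.cons_append, act, h, ih]
                  · simp only [List.cons_append, act, if_neg h]
                    cases v with
                    | nil => rfl
                    | cons _ _ => rfl

/-- The setoid of queue-action equivalence. -/
def qsetoid (A : Type) [DecidableEq A] : Setoid (List (Act A)) :=
  ⟨qequiv, ⟨fun _ _ => rfl, fun h q => (h q).symm, fun h1 h2 q => (h1 q).trans (h2 q)⟩⟩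

/-- The monoid of queue actions. -/
def QAct (A : Type) [DecidableEq A] : Type := Quotient (qsetoid A)

theorem act_none : ∀ v : List (Act A), act (none : Option (List A)) v = none
  | [] => rfl
  | _ :: _ => rfl

theorem qequiv_append {u u' v v' : List (Act A)} (hu : qequiv u u') (hv : qequiv v v') :
    qequiv (u ++ v) (u' ++ v') := by
  intro q
  rw [act_append, act_append, hu q]
  cases h : act (some q) u' with
  | none => rw [act_none, act_none]
  | some q' => exact hv q'

instance : Monoid (QAct A) where
  mul := Quotient.map₂ (· ++ ·) (fun _ _ hu _ _ hv => qequiv_append hu hv)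
  one := Quotient.mk (qsetoid A) []
  mul_assoc := by
    rintro ⟨u⟩ ⟨v⟩ ⟨w⟩
    exact congrArg (Quotient.mk (qsetoid A)) (List.append_assoc u v w)
  one_mul := by
    rintro ⟨u⟩
    rfl
  mul_one := by
    rintro ⟨u⟩
    exact congrArg (Quotient.mk (qsetoid A)) (List.append_nil u)

/-- The class of a word in the monoid of queue actions. -/
def cls (w : List (Act A)) : QAct A := Quotient.mk (qsetoid A) w

theorem cls_mul (u v : List (Act A)) : cls u * cls v = cls (u ++ v) := rfl

/-- The rules of the semi-Thue system `R`. -/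
inductive Rule : List (Act A) → List (Act A) → Prop
  | comm (a b : A) (h : a ≠ b) : Rule [Act.wr a, Act.rd b] [Act.rd b, Act.wr a]
  | wwr (a b : A) : Rule [Act.wr a, Act.wr b, Act.rd b] [Act.wr a, Act.rd b, Act.wr b]
  | wrr (a b : A) : Rule [Act.wr a, Act.rd a, Act.rd b] [Act.rd a, Act.wr a, Act.rd b]

/-- One rewriting step of the semi-Thue system `R`. -/
def Step (u v : List (Act A)) : Prop :=
  ∃ (l r x y : List (Act A)), Rule x y ∧ u = l ++ x ++ r ∧ v = l ++ y ++ r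

/-!
In context, each of the three rules is the same swap `a b̄ → b̄ a`; they only differ in what makes
the swap legal: `a ≠ b`, a write letter just before the factor, or a read letter just after it.
A swap puts a read letter first and a write letter last in its factor, so it can only help a factor
to its left or to its right become swappable. As two factors of the form `a b̄` never overlap
partially, two different swaps of a word commute, and the system has the diamond property.
-/

section

open Act Relation

variable {α : Type}

/-- The factor `a b̄` of the word `l a b̄ r` may be rewritten to `b̄ a`. The alternatives stand for
the rules `comm`, `wwr` and `wrr`; the outer letter of the latter two is read off the context `l` or
`r`, and their requirement `a = b` is dropped because `comm` covers `a ≠ b`. -/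
def Swappable (l : List (Act α)) (a b : α) (r : List (Act α)) : Prop :=
  a ≠ b ∨ (∃ c, l.getLast? = some (wr c)) ∨ ∃ c, r.head? = some (rd c)

theorem Swappable.step {l r : List (Act α)} {a b : α} (h : Swappable l a b r) :
    Step (l ++ wr a :: rd b :: r) (l ++ rd b :: wr a :: r) := by
  rcases eq_or_ne a b with rfl | hab
  · rcases h with h | ⟨c, hc⟩ | ⟨c, hc⟩
    · exact absurd rfl h
    · obtain ⟨l', rfl⟩ := List.getLast?_eq_some_iff.mp hc
      exact ⟨l', r, _, _, .wwr c a, by simp, by simp⟩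
    · obtain ⟨r', rfl⟩ := List.head?_eq_some_iff.mp hc
      exact ⟨l, r', _, _, .wrr a c, by simp, by simp⟩
  · exact ⟨l, r, _, _, .comm a b hab, by simp, by simp⟩

theorem Step.exists_swappable {u v : List (Act α)} (h : Step u v) :
    ∃ l a b r, Swappable l a b r ∧
      u = l ++ wr a :: rd b :: r ∧ v = l ++ rd b :: wr a :: r := by
  obtain ⟨l, r, x, y, hxy, rfl, rfl⟩ := h
  cases hxy with
  | comm a b hab => exact ⟨l, a, b, r, .inl hab, by simp, by simp⟩
  | wwr a b => exact ⟨l ++ [wr a], b, b, r, .inr (.inl ⟨a, by simp⟩), by simp, by simp⟩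
  | wrr a b => exact ⟨l, a, a, rd b :: r, .inr (.inr ⟨b, rfl⟩), by simp, by simp⟩

theorem Swappable.swap_left {l m r : List (Act α)} {a b c d : α}
    (h : Swappable (l ++ wr a :: rd b :: m) c d r) :
    Swappable (l ++ rd b :: wr a :: m) c d r := by
  refine h.imp_right (Or.imp_left ?_)
  rintro ⟨e, he⟩
  rcases List.eq_nil_or_concat m with rfl | ⟨m', x, rfl⟩
  · exact ⟨a, by simp⟩
  · exact ⟨e, by simpa [List.getLast?_cons] using he⟩

theorem Swappable.swap_right {l m r : List (Act α)} {a b c d : α}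
    (h : Swappable l a b (m ++ wr c :: rd d :: r)) :
    Swappable l a b (m ++ rd d :: wr c :: r) := by
  refine h.imp_right (Or.imp_right ?_)
  rintro ⟨e, he⟩
  cases m with
  | nil => exact ⟨d, rfl⟩
  | cons x m' => exact ⟨e, he⟩

theorem wr_rd_append_eq_iff {m r s : List (Act α)} {a b c d : α} :
    wr a :: rd b :: r = m ++ wr c :: rd d :: s ↔
      (m = [] ∧ a = c ∧ b = d ∧ r = s) ∨
        ∃ m', m = wr a :: rd b :: m' ∧ r = m' ++ wr c :: rd d :: s := by
  match m with
  | [] => simp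
  | [x] => simp
  | x :: y :: m' => simp [eq_comm, and_assoc]

theorem Swappable.diamond {l m r s : List (Act α)} {a b c d : α}
    (hab : Swappable l a b r) (hcd : Swappable (l ++ m) c d s)
    (h : wr a :: rd b :: r = m ++ wr c :: rd d :: s) :
    ∃ z, ReflGen Step (l ++ rd b :: wr a :: r) z ∧
      ReflGen Step (l ++ m ++ rd d :: wr c :: s) z := by
  rcases wr_rd_append_eq_iff.mp h with ⟨rfl, rfl, rfl, rfl⟩ | ⟨m', rfl, rfl⟩
  · exact ⟨_, .refl, by simpa using .refl⟩
  · refine ⟨l ++ rd b :: wr a :: (m' ++ rd d :: wr c :: s), ?_, ?_⟩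
    · simpa using ReflGen.single hcd.swap_left.step
    · simpa using ReflGen.single hab.swap_right.step

theorem Step.diamond {u v w : List (Act α)} (hv : Step u v) (hw : Step u w) :
    ∃ z, ReflGen Step v z ∧ ReflGen Step w z := by
  obtain ⟨l₁, a, b, r₁, hab, rfl, rfl⟩ := hv.exists_swappable
  obtain ⟨l₂, c, d, r₂, hcd, h, rfl⟩ := hw.exists_swappable
  rcases List.append_eq_append_iff.mp h with ⟨m, rfl, hm⟩ | ⟨m, rfl, hm⟩
  · exact hab.diamond hcd hm
  · obtain ⟨z, hwz, hvz⟩ := hcd.diamond hab hm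
    exact ⟨z, hvz, hwz⟩

theorem stmt5_general (w w₁ w₂ : List (Act α))
    (h₁ : ReflTransGen Step w w₁) (h₂ : ReflTransGen Step w w₂) :
    ∃ w₃, ReflTransGen Step w₁ w₃ ∧ ReflTransGen Step w₂ w₃ := by
  refine church_rosser (fun u v v' hv hv' => ?_) h₁ h₂
  obtain ⟨z, hvz, hvz'⟩ := hv.diamond hv'
  exact ⟨z, hvz, hvz'.to_reflTransGen⟩

end

/-- The semi-Thue system `R` is confluent. -/
theorem stmt5 [Fintype A] :
    ∀ w w₁ w₂ : List (Act A),
      Relation.ReflTransGen Step w w₁ → Relation.ReflTransGen Step w w₂ →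
      ∃ w₃, Relation.ReflTransGen Step w₁ w₃ ∧ Relation.ReflTransGen Step w₂ w₃ :=
  stmt5_general
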